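/- Universal uncertainty principle (Ozawa's inequality, pure-state operator form): let A, B, N, D be bounded self-adjoint operators on a complex Hilbert space H such that A + N commutes with B + D, and let ψ ∈ H be a unit vector. Then ‖Nψ‖·‖Dψ‖ + ‖Nψ‖·σ(B;ψ) + σ(A;ψ)·‖Dψ‖ ≥ (1/2)·|⟨ψ, (A∘B − B∘A)ψ⟩|. (Here N plays the role of the noise operator of a measurement of A and D the disturbance operator of B; the commutation of A+N with B+D expresses that the meter observable commutes with the disturbed observable.) -/

import Mathlib

open ContinuousLinearMap

/-- The standard deviation of a bounded operator `A` in the vector state `ψ`: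
`σ(A;ψ)² = ‖Aψ‖² − (re⟨ψ, Aψ⟩)²`. -/
noncomputable def stddev {H : Type*} [NormedAddCommGroup H] [InnerProductSpace ℂ H]
    (A : H →L[ℂ] H) (ψ : H) : ℝ :=
  Real.sqrt (‖A ψ‖ ^ 2 - (Complex.re (inner ℂ ψ (A ψ))) ^ 2)

theorem stddev_eq_aux {H : Type*} [NormedAddCommGroup H] [InnerProductSpace ℂ H]
    (A : H →L[ℂ] H) (ψ : H) (hψ : ‖ψ‖ = 1) :
    stddev A ψ = ‖A ψ - ((Complex.re (inner ℂ ψ (A ψ)) : ℝ) : ℂ) • ψ‖ := by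
  unfold stddev
  rw [← Real.sqrt_sq (norm_nonneg (A ψ - _))]
  congr 1
  rw [@norm_sub_sq ℂ, inner_smul_right, norm_smul, hψ]
  have h : (inner ℂ (A ψ) ψ : ℂ).re = (inner ℂ ψ (A ψ) : ℂ).re := inner_re_symm (𝕜 := ℂ) _ _
  simp [h]
  ring

theorem half_aux {H : Type*} [NormedAddCommGroup H] [InnerProductSpace ℂ H] (x y : H) :
    ‖(inner ℂ x y - inner ℂ y x : ℂ)‖ ≤ 2 * (‖x‖ * ‖y‖) := by
  have h1 := norm_inner_le_norm (𝕜 := ℂ) x y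
  have h2 := norm_inner_le_norm (𝕜 := ℂ) y x
  have h3 := norm_sub_le (inner ℂ x y : ℂ) (inner ℂ y x)
  nlinarith

/-- Universal uncertainty principle (Ozawa's inequality, pure-state operator form). -/
theorem ozawa_inequality {H : Type*} [NormedAddCommGroup H] [InnerProductSpace ℂ H]
    [CompleteSpace H] (A B N D : H →L[ℂ] H)
    (hA : IsSelfAdjoint A) (hB : IsSelfAdjoint B)
    (hN : IsSelfAdjoint N) (hD : IsSelfAdjoint D)
    (hcomm : (A + N) ∘L (B + D) = (B + D) ∘L (A + N))
    (ψ : H) (hψ : ‖ψ‖ = 1) :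
    ‖N ψ‖ * ‖D ψ‖ + ‖N ψ‖ * stddev B ψ + stddev A ψ * ‖D ψ‖ ≥
      (1 / 2) * ‖inner ℂ ψ ((A ∘L B - B ∘L A) ψ)‖ := by
  rw [stddev_eq_aux A ψ hψ, stddev_eq_aux B ψ hψ]
  generalize Complex.re (inner ℂ ψ (A ψ)) = α
  generalize Complex.re (inner ℂ ψ (B ψ)) = β
  have sA := hA.isSymmetric
  have sB := hB.isSymmetric
  have sN := hN.isSymmetric
  have sD := hD.isSymmetric
  have eAB : ∀ x, (inner ℂ ψ (A x) : ℂ) = inner ℂ (A ψ) x := fun x => (sA ψ x).symm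
  have eBB : ∀ x, (inner ℂ ψ (B x) : ℂ) = inner ℂ (B ψ) x := fun x => (sB ψ x).symm
  have eNB : ∀ x, (inner ℂ ψ (N x) : ℂ) = inner ℂ (N ψ) x := fun x => (sN ψ x).symm
  have eDB : ∀ x, (inner ℂ ψ (D x) : ℂ) = inner ℂ (D ψ) x := fun x => (sD ψ x).symm
  have hc : (inner ℂ ψ (((A + N) ∘L (B + D)) ψ) : ℂ) = inner ℂ ψ (((B + D) ∘L (A + N)) ψ) := by
    rw [hcomm]
  simp only [ContinuousLinearMap.comp_apply, add_apply, map_add, inner_add_right,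
    eAB, eBB, eNB, eDB] at hc
  have key : (inner ℂ ψ ((A ∘L B - B ∘L A) ψ) : ℂ) =
      -((inner ℂ (N ψ) (D ψ) - inner ℂ (D ψ) (N ψ)) +
        (inner ℂ (N ψ) (B ψ - (β : ℂ) • ψ) - inner ℂ (B ψ - (β : ℂ) • ψ) (N ψ)) +
        (inner ℂ (A ψ - (α : ℂ) • ψ) (D ψ) - inner ℂ (D ψ) (A ψ - (α : ℂ) • ψ))) := by
    simp only [ContinuousLinearMap.comp_apply, sub_apply, inner_sub_right, inner_sub_left,
      inner_smul_left, inner_smul_right, Complex.conj_ofReal, eAB, eBB, eNB, eDB]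
    linear_combination hc
  rw [key, norm_neg]
  have h1 := half_aux (N ψ) (D ψ)
  have h2 := half_aux (N ψ) (B ψ - (β : ℂ) • ψ)
  have h3 := half_aux (A ψ - (α : ℂ) • ψ) (D ψ)
  have h4 := norm_add₃_le (a := (inner ℂ (N ψ) (D ψ) - inner ℂ (D ψ) (N ψ) : ℂ))
    (b := inner ℂ (N ψ) (B ψ - (β : ℂ) • ψ) - inner ℂ (B ψ - (β : ℂ) • ψ) (N ψ))
    (c := inner ℂ (A ψ - (α : ℂ) • ψ) (D ψ) - inner ℂ (D ψ) (A ψ - (α : ℂ) • ψ))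
  linarith
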